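/- arXiv:2009.12594 — 2 statements merged into one kernel-verified Lean document; each statement's English description precedes it below -/
import Mathlib

section
/- Let w₁, w₂ > 0 and a ≥ (w₁+w₂)/2, and define G₂(a,w,t) = e^{(w₁+w₂−a)t}/((e^{w₁t}−1)(e^{w₂t}−1)) − 1/(w₁w₂t²) for t > 0. Then for every real σ with 1 < σ < 2 one has ∫₀^∞ G₂(a,w,t) t^{σ−1} dt < 0. -/
open MeasureTheory Real Set

/-- The Barnes `G₂` kernel:
`G₂(a, w, t) = e^{(w₁+w₂−a)t}/((e^{w₁t}−1)(e^{w₂t}−1)) − 1/(w₁w₂t²)`. -/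
noncomputable def G₂ (a w₁ w₂ t : ℝ) : ℝ :=
  Real.exp ((w₁ + w₂ - a) * t) / ((Real.exp (w₁ * t) - 1) * (Real.exp (w₂ * t) - 1))
    - 1 / (w₁ * w₂ * t ^ 2)

/-!
Dividing through by `e^{(w₁+w₂)t}`, the first term of `G₂` becomes
`e^{-at} / ((1 - e^{-w₁t})(1 - e^{-w₂t}))`. The bounds `x e^{-x/2} < 1 - e^{-x} ≤ x` for `x > 0`,
the first of which is `x/2 < sinh (x/2)`, give
`(e^{-at} - 1)/(w₁w₂t²) ≤ G₂ < (e^{((w₁+w₂)/2 - a)t} - 1)/(w₁w₂t²)`.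
The upper bound is nonpositive exactly when `a ≥ (w₁+w₂)/2`, so the integrand is negative, and the
two bounds together give `G₂ = O(1/t)` at `0`. As `G₂ = O(1/t²)` at infinity when `a > 0`, the
integral converges for `1 < σ < 2`.
-/

open Filter Asymptotics Topology

theorem setIntegral_neg_of_forall_neg {X : Type*} [MeasurableSpace X] {μ : Measure X} {s : Set X}
    {f : X → ℝ} (hs : MeasurableSet s) (hμs : μ s ≠ 0) (hfi : IntegrableOn f s μ)
    (hf : ∀ x ∈ s, f x < 0) : ∫ x in s, f x ∂μ < 0 := by
  have hnonneg : 0 ≤ᵐ[μ.restrict s] -f :=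
    ae_restrict_of_forall_mem hs fun x hx ↦ (neg_pos.2 (hf x hx)).le
  have hsub : s ⊆ Function.support (-f) ∩ s := fun x hx ↦ ⟨neg_ne_zero.2 (hf x hx).ne, hx⟩
  have hpos : 0 < ∫ x in s, (-f) x ∂μ :=
    (setIntegral_pos_iff_support_of_nonneg_ae hnonneg hfi.neg).2 <|
      (pos_iff_ne_zero.2 hμs).trans_le (measure_mono hsub)
  simpa only [Pi.neg_apply, integral_neg, neg_pos] using hpos

theorem one_sub_exp_neg_pos {x : ℝ} (hx : 0 < x) : 0 < 1 - exp (-x) :=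
  sub_pos.2 (exp_lt_one_iff.2 (neg_neg_of_pos hx))

theorem one_sub_exp_neg_le (x : ℝ) : 1 - exp (-x) ≤ x := by
  linarith [one_sub_le_exp_neg x]

theorem mul_exp_neg_half_lt_one_sub_exp_neg {x : ℝ} (hx : 0 < x) :
    x * exp (-(x / 2)) < 1 - exp (-x) := by
  have hsinh : x < exp (x / 2) - exp (-(x / 2)) := by
    linarith [self_lt_sinh_iff.2 (half_pos hx), sinh_eq (x / 2)]
  calc x * exp (-(x / 2)) < (exp (x / 2) - exp (-(x / 2))) * exp (-(x / 2)) := by gcongr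
    _ = 1 - exp (-x) := by
      rw [sub_mul, ← exp_add, ← exp_add, add_neg_cancel, exp_zero, ← neg_add, add_halves]

theorem isBigO_exp_mul_sub_one_div_sq (c : ℝ) :
    (fun t ↦ (exp (c * t) - 1) / t ^ 2) =O[𝓝[>] 0] fun t : ℝ ↦ t ^ (-1 : ℝ) := by
  have hderiv : HasDerivAt (fun t ↦ exp (c * t)) (exp (c * 0) * (c * 1)) 0 :=
    ((hasDerivAt_id' 0).const_mul c).exp
  have hnum : (fun t ↦ exp (c * t) - 1) =O[𝓝[>] 0] fun t : ℝ ↦ t := by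
    simpa only [mul_zero, exp_zero, sub_zero] using hderiv.isBigO_sub.mono nhdsWithin_le_nhds
  refine (hnum.mul (isBigO_refl (fun t ↦ (t ^ 2)⁻¹) _)).congr' ?_ ?_
  · exact .of_forall fun t ↦ (div_eq_mul_inv _ _).symm
  · filter_upwards [self_mem_nhdsWithin] with t (ht : 0 < t)
    rw [rpow_neg_one]
    field_simp

theorem tendsto_one_sub_exp_neg_mul_atTop {w : ℝ} (hw : 0 < w) :
    Tendsto (fun t ↦ 1 - exp (-(w * t))) atTop (𝓝 1) := by
  have hexp : Tendsto (fun t ↦ exp (-(w * t))) atTop (𝓝 0) :=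
    tendsto_exp_neg_atTop_nhds_zero.comp (tendsto_id.const_mul_atTop hw)
  simpa only [sub_zero] using hexp.const_sub 1

theorem G₂_eq (a w₁ w₂ t : ℝ) :
    G₂ a w₁ w₂ t = exp (-(a * t)) / ((1 - exp (-(w₁ * t))) * (1 - exp (-(w₂ * t)))) -
      1 / (w₁ * w₂ * t ^ 2) := by
  have hfactor (x : ℝ) : exp x - 1 = exp x * (1 - exp (-x)) := by
    rw [mul_sub, ← exp_add, add_neg_cancel, exp_zero, mul_one]
  have hnum : exp ((w₁ + w₂ - a) * t) = exp (w₁ * t) * exp (w₂ * t) * exp (-(a * t)) := by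
    rw [← exp_add, ← exp_add]
    ring_nf
  rw [G₂, hfactor, hfactor, hnum, mul_mul_mul_comm, mul_div_mul_left _ _ (by positivity)]

section Kernel

variable {w₁ w₂ t : ℝ}

theorem exp_sub_one_div_le_G₂ (a : ℝ) (hw₁ : 0 < w₁) (hw₂ : 0 < w₂) (ht : 0 < t) :
    (exp (-a * t) - 1) / (w₁ * w₂ * t ^ 2) ≤ G₂ a w₁ w₂ t := by
  have h₁ := one_sub_exp_neg_pos (mul_pos hw₁ ht)
  have h₂ := one_sub_exp_neg_pos (mul_pos hw₂ ht)
  have hden : (1 - exp (-(w₁ * t))) * (1 - exp (-(w₂ * t))) ≤ w₁ * w₂ * t ^ 2 :=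
    calc _ ≤ w₁ * t * (w₂ * t) := by gcongr <;> exact one_sub_exp_neg_le _
      _ = w₁ * w₂ * t ^ 2 := by ring
  rw [G₂_eq, sub_div, neg_mul]
  gcongr

theorem G₂_lt_exp_sub_one_div (a : ℝ) (hw₁ : 0 < w₁) (hw₂ : 0 < w₂) (ht : 0 < t) :
    G₂ a w₁ w₂ t < (exp (((w₁ + w₂) / 2 - a) * t) - 1) / (w₁ * w₂ * t ^ 2) := by
  have hden : w₁ * w₂ * t ^ 2 * exp (-((w₁ + w₂) / 2 * t)) <
      (1 - exp (-(w₁ * t))) * (1 - exp (-(w₂ * t))) :=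
    calc _ = w₁ * t * exp (-(w₁ * t / 2)) * (w₂ * t * exp (-(w₂ * t / 2))) := by
          rw [mul_mul_mul_comm, ← exp_add]
          ring_nf
      _ < _ := by
          gcongr <;> exact mul_exp_neg_half_lt_one_sub_exp_neg (by positivity)
  rw [G₂_eq, sub_div]
  refine sub_lt_sub_right ?_ _
  calc _ < exp (-(a * t)) / (w₁ * w₂ * t ^ 2 * exp (-((w₁ + w₂) / 2 * t))) :=
        div_lt_div_of_pos_left (exp_pos _) (by positivity) hden
    _ = exp (((w₁ + w₂) / 2 - a) * t) / (w₁ * w₂ * t ^ 2) := by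
      rw [mul_comm (w₁ * w₂ * t ^ 2), ← div_div, ← exp_sub]
      ring_nf

theorem G₂_neg {a : ℝ} (hw₁ : 0 < w₁) (hw₂ : 0 < w₂) (ha : (w₁ + w₂) / 2 ≤ a) (ht : 0 < t) :
    G₂ a w₁ w₂ t < 0 :=
  (G₂_lt_exp_sub_one_div a hw₁ hw₂ ht).trans_le <| div_nonpos_of_nonpos_of_nonneg
    (sub_nonpos.2 <| exp_le_one_iff.2 <| mul_nonpos_of_nonpos_of_nonneg (sub_nonpos.2 ha) ht.le)
    (by positivity)

theorem continuousOn_G₂ (a : ℝ) (hw₁ : w₁ ≠ 0) (hw₂ : w₂ ≠ 0) :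
    ContinuousOn (G₂ a w₁ w₂) {0}ᶜ := by
  have hexp {w t : ℝ} (hw : w ≠ 0) (ht : t ≠ 0) : exp (w * t) - 1 ≠ 0 :=
    sub_ne_zero.2 <| exp_eq_one_iff _ |>.not.2 <| mul_ne_zero hw ht
  unfold G₂
  refine .sub (.div (by fun_prop) (by fun_prop) ?_) (.div (by fun_prop) (by fun_prop) ?_)
  · exact fun t ht ↦ mul_ne_zero (hexp hw₁ ht) (hexp hw₂ ht)
  · exact fun t ht ↦ mul_ne_zero (mul_ne_zero hw₁ hw₂) (pow_ne_zero 2 ht)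

theorem G₂_isBigO_nhdsGT_zero (a : ℝ) (hw₁ : 0 < w₁) (hw₂ : 0 < w₂) :
    G₂ a w₁ w₂ =O[𝓝[>] 0] fun t : ℝ ↦ t ^ (-1 : ℝ) := by
  have hbound (c : ℝ) :
      (fun t ↦ |(exp (c * t) - 1) / (w₁ * w₂ * t ^ 2)|) =O[𝓝[>] 0] fun t : ℝ ↦ t ^ (-1 : ℝ) := by
    simpa only [mul_div_assoc', inv_mul_eq_div, div_div, mul_comm (_ ^ 2) (w₁ * w₂)] using
      ((isBigO_exp_mul_sub_one_div_sq c).const_mul_left (w₁ * w₂)⁻¹).abs_left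
  refine .trans (.of_norm_eventuallyLE ?_) ((hbound (-a)).add (hbound ((w₁ + w₂) / 2 - a)))
  filter_upwards [self_mem_nhdsWithin] with t (ht : 0 < t)
  calc |G₂ a w₁ w₂ t| ≤ max |_| |_| :=
        abs_le_max_abs_abs (exp_sub_one_div_le_G₂ a hw₁ hw₂ ht)
          (G₂_lt_exp_sub_one_div a hw₁ hw₂ ht).le
    _ ≤ _ := max_le_add_of_nonneg (abs_nonneg _) (abs_nonneg _)

theorem G₂_isBigO_atTop {a : ℝ} (ha : 0 < a) (hw₁ : 0 < w₁) (hw₂ : 0 < w₂) :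
    G₂ a w₁ w₂ =O[atTop] fun t : ℝ ↦ t ^ (-2 : ℝ) := by
  have hden : Tendsto (fun t ↦ ((1 - exp (-(w₁ * t))) * (1 - exp (-(w₂ * t))))⁻¹) atTop
      (𝓝 (1 * 1)⁻¹) :=
    ((tendsto_one_sub_exp_neg_mul_atTop hw₁).mul (tendsto_one_sub_exp_neg_mul_atTop hw₂)).inv₀
      (by norm_num)
  have hexp : (fun t ↦ exp (-(a * t)) / ((1 - exp (-(w₁ * t))) * (1 - exp (-(w₂ * t)))))
      =O[atTop] fun t : ℝ ↦ t ^ (-2 : ℝ) := by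
    simpa only [div_eq_mul_inv, neg_mul, mul_one] using
      (isLittleO_exp_neg_mul_rpow_atTop ha (-2)).isBigO.mul (hden.isBigO_one ℝ)
  have hpow : (fun t ↦ 1 / (w₁ * w₂ * t ^ 2)) =O[atTop] fun t : ℝ ↦ t ^ (-2 : ℝ) := by
    refine ((isBigO_refl _ _).const_mul_left (w₁ * w₂)⁻¹).congr' ?_ .rfl
    filter_upwards [eventually_ge_atTop 0] with t ht
    rw [rpow_neg ht, rpow_two, one_div, mul_inv (w₁ * w₂)]
  exact (hexp.sub hpow).congr_left fun t ↦ (G₂_eq a w₁ w₂ t).symm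

theorem integrableOn_G₂_mul_rpow {a σ : ℝ} (ha : 0 < a) (hw₁ : 0 < w₁) (hw₂ : 0 < w₂)
    (hσ : 1 < σ) (hσ' : σ < 2) :
    IntegrableOn (fun t ↦ G₂ a w₁ w₂ t * t ^ (σ - 1)) (Ioi 0) := by
  have hloc : LocallyIntegrableOn (G₂ a w₁ w₂) (Ioi 0) :=
    ((continuousOn_G₂ a hw₁.ne' hw₂.ne').mono fun _ ↦ ne_of_gt).locallyIntegrableOn
      measurableSet_Ioi
  simpa only [mul_comm] using mellin_convergent_of_isBigO_scalar hloc
    (G₂_isBigO_atTop ha hw₁ hw₂) hσ' (G₂_isBigO_nhdsGT_zero a hw₁ hw₂) hσ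

end Kernel

theorem stmt1 (w₁ w₂ a : ℝ) (hw₁ : 0 < w₁) (hw₂ : 0 < w₂)
    (ha : (w₁ + w₂) / 2 ≤ a) (σ : ℝ) (hσ : 1 < σ) (hσ' : σ < 2) :
    ∫ t in Set.Ioi (0 : ℝ), G₂ a w₁ w₂ t * t ^ (σ - 1) < 0 := by
  have ha₀ : 0 < a := (half_pos (add_pos hw₁ hw₂)).trans_le ha
  refine setIntegral_neg_of_forall_neg measurableSet_Ioi (by simp)
    (integrableOn_G₂_mul_rpow ha₀ hw₁ hw₂ hσ hσ') fun t ht ↦ ?_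
  exact mul_neg_of_neg_of_pos (G₂_neg hw₁ hw₂ ha ht) (rpow_pos_of_pos ht _)
end

section
/- Let w₁, w₂ > 0 and 0 < a < (w₁+w₂)/2, and define G₂(a,w,t) = e^{(w₁+w₂−a)t}/((e^{w₁t}−1)(e^{w₂t}−1)) − 1/(w₁w₂t²) for t > 0. Then there exists t₀ > 0 such that G₂(a,w,t₀) = 0, G₂(a,w,t) > 0 for all 0 < t < t₀, and G₂(a,w,t) < 0 for all t > t₀. -/
/-!
Dividing the term `1 / (w₁ w₂ t ^ 2)` of `G₂` by the other one and taking logarithms gives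
`E t = L (w₁ t / 2) + L (w₂ t / 2) - ((w₁ + w₂) / 2 - a) t` with `L x = log (sinh x / x)`, and the
sign of `G₂` is opposite to that of `E`. The derivative `coth x - 1 / x` of `L` is strictly
increasing because its own derivative is `1 / x ^ 2 - 1 / sinh x ^ 2 > 0`, so `E` is strictly convex
with `E 0 = 0`. Such a function changes sign at most once on `(0, ∞)`. It does so because
`L x = O(x ^ 2)` at `0`, where the condition `a < (w₁ + w₂) / 2` makes `E` negative, and `L x ∼ x`
at infinity, where `E t ∼ a t` is positive.
-/

open Real

open Set Filter Topology

section StrictConvex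

variable {f : ℝ → ℝ}

lemma strictConvexOn_comp_mul_left (hf : StrictConvexOn ℝ univ f) {c : ℝ} (hc : c ≠ 0) :
    StrictConvexOn ℝ univ fun t ↦ f (c * t) := by
  refine ⟨convex_univ, fun x _ y _ hxy p q hp hq hpq ↦ ?_⟩
  have hne : c * x ≠ c * y := (mul_right_injective₀ hc).ne hxy
  calc f (c * (p • x + q • y)) = f (p • (c * x) + q • (c * y)) := by
        simp only [smul_eq_mul]; ring_nf
    _ < p • f (c * x) + q • f (c * y) := hf.2 (mem_univ _) (mem_univ _) hne hp hq hpq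

lemma exists_sign_change_of_strictConvexOn_Ici {p u v : ℝ} (hf : StrictConvexOn ℝ (Ici p) f)
    (hp : f p ≤ 0) (hpu : p < u) (hu : f u ≤ 0) (hpv : p < v) (hv : 0 ≤ f v) :
    ∃ z, p < z ∧ f z = 0 ∧ (∀ t, p < t → t < z → f t < 0) ∧ ∀ t, z < t → 0 < f t := by
  have lt_max_endpoints {s t : ℝ} (hs : p < s) (hst : s < t) : f s < max (f p) (f t) :=
    have hpt : p < t := hs.trans hst
    hf.lt_on_openSegment self_mem_Ici hpt.le hpt.ne (openSegment_eq_Ioo hpt ▸ ⟨hs, hst⟩)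
  have huv : u ≤ v := by
    by_contra! hvu
    exact ((lt_max_endpoints hpv hvu).trans_le (max_le hp hu)).not_ge hv
  have hcont : ContinuousOn f (Ioi p) := interior_Ici (a := p) ▸ hf.convexOn.continuousOn_interior
  obtain ⟨z, hz, hfz⟩ := intermediate_value_Icc huv
    (hcont.mono fun t ht ↦ hpu.trans_le ht.1) ⟨hu, hv⟩
  have hpz : p < z := hpu.trans_le hz.1
  refine ⟨z, hpz, hfz, fun t hpt htz ↦ ?_, fun t hzt ↦ ?_⟩
  · exact (lt_max_endpoints hpt htz).trans_le (max_le hp hfz.le)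
  · by_contra! hft
    exact ((lt_max_endpoints hpz hzt).trans_le (max_le hp hft)).ne hfz

end StrictConvex

lemma strictConvexOn_sinh : StrictConvexOn ℝ (Ici 0) sinh := by
  refine StrictMonoOn.strictConvexOn_of_deriv (convex_Ici 0) continuous_sinh.continuousOn ?_
  rw [Real.deriv_sinh]
  exact cosh_strictMonoOn.mono interior_subset

lemma sinh_div_self_lt_cosh {x : ℝ} (hx : 0 < x) : sinh x / x < cosh x := by
  simpa [slope_def_field] using
    strictConvexOn_sinh.slope_lt_of_hasDerivAt self_mem_Ici hx.le hx (hasDerivAt_sinh x)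

lemma sinh_div_self_pos {x : ℝ} (hx : x ≠ 0) : 0 < sinh x / x := by
  rcases hx.lt_or_gt with hx | hx
  · exact div_pos_of_neg_of_neg (sinh_neg_iff.2 hx) hx
  · exact div_pos (sinh_pos_iff.2 hx) hx

lemma exp_sub_one_eq_exp_half_mul_sinh_half (x : ℝ) :
    exp x - 1 = 2 * exp (x / 2) * sinh (x / 2) := by
  have hsq : exp x = exp (x / 2) * exp (x / 2) := by rw [← exp_add, add_halves]
  rw [sinh_eq, exp_neg, hsq]
  field_simp

lemma hasDerivAt_coth_sub_inv {x : ℝ} (hx : x ≠ 0) :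
    HasDerivAt (fun y ↦ cosh y / sinh y - y⁻¹) ((x ^ 2)⁻¹ - (sinh x ^ 2)⁻¹) x := by
  have hs : sinh x ≠ 0 := sinh_ne_zero.2 hx
  refine (((hasDerivAt_cosh x).fun_div (hasDerivAt_sinh x) hs).fun_sub
    (hasDerivAt_inv hx)).congr_deriv ?_
  have hcosh := cosh_sq x
  field_simp
  rw [hcosh]
  ring

-- Division by zero gives the continuous extension `coth 0 - 0⁻¹ = 0`.
lemma strictMono_coth_sub_inv : StrictMono fun x : ℝ ↦ cosh x / sinh x - x⁻¹ := by
  have hpos {x : ℝ} (hx : 0 < x) : 0 < cosh x / sinh x - x⁻¹ := by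
    have := sinh_div_self_lt_cosh hx
    rw [sub_pos, lt_div_iff₀ (sinh_pos_iff.2 hx)]
    rwa [inv_mul_eq_div]
  have hmono : StrictMonoOn (fun x : ℝ ↦ cosh x / sinh x - x⁻¹) (Ioi 0) := by
    refine strictMonoOn_of_deriv_pos (convex_Ioi 0)
      (fun x hx ↦ (hasDerivAt_coth_sub_inv hx.ne').continuousAt.continuousWithinAt) fun x hx ↦ ?_
    rw [interior_Ioi, mem_Ioi] at hx
    have : x < sinh x := self_lt_sinh_iff.2 hx
    rw [(hasDerivAt_coth_sub_inv hx.ne').deriv, sub_pos]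
    gcongr
  refine strictMono_of_odd_strictMonoOn_nonneg (fun x ↦ ?_) fun x hx y _ hxy ↦ ?_
  · simp only [cosh_neg, sinh_neg, div_neg, inv_neg]
    ring
  · rcases (mem_Ici.1 hx).eq_or_lt with rfl | hx
    · simpa using hpos hxy
    · exact hmono hx (hx.trans hxy) hxy

/-- The logarithm of the hyperbolic analogue `sinh x / x` of `Real.sinc`. At `0` the conventions
`0 / 0 = 0` and `log 0 = 0` produce the continuous value `0`. -/
noncomputable def logSinhc (x : ℝ) : ℝ := log (sinh x / x)

@[simp]
lemma logSinhc_zero : logSinhc 0 = 0 := by simp [logSinhc]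

lemma logSinhc_abs (x : ℝ) : logSinhc |x| = logSinhc x := by
  rcases abs_choice x with h | h <;> simp [h, logSinhc]

lemma exp_logSinhc {x : ℝ} (hx : x ≠ 0) : exp (logSinhc x) = sinh x / x :=
  exp_log (sinh_div_self_pos hx)

lemma logSinhc_nonneg (x : ℝ) : 0 ≤ logSinhc x := by
  rw [← logSinhc_abs]
  rcases (abs_nonneg x).eq_or_lt with h | h
  · rw [← h, logSinhc_zero]
  · exact log_nonneg <| (one_le_div h).2 (self_lt_sinh_iff.2 h).le

lemma logSinhc_le_sq_div_two (x : ℝ) : logSinhc x ≤ x ^ 2 / 2 := by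
  rw [← logSinhc_abs, ← sq_abs]
  rcases (abs_nonneg x).eq_or_lt with h | h
  · simp [← h]
  · rw [← exp_le_exp, exp_logSinhc h.ne']
    exact (sinh_div_self_lt_cosh h).le.trans (cosh_le_exp_half_sq _)

lemma hasDerivAt_logSinhc (x : ℝ) : HasDerivAt logSinhc (cosh x / sinh x - x⁻¹) x := by
  rcases eq_or_ne x 0 with rfl | hx
  · have hO : logSinhc =O[𝓝 0] fun x ↦ ‖x - 0‖ ^ 2 :=
      .of_bound (1 / 2) <| .of_forall fun x ↦ by
        simpa [abs_of_nonneg (logSinhc_nonneg x), div_eq_inv_mul] using logSinhc_le_sq_div_two x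
    exact (hO.hasFDerivAt one_lt_two).hasDerivAt.congr_deriv (by simp)
  · have hs : sinh x ≠ 0 := sinh_ne_zero.2 hx
    refine (((hasDerivAt_sinh x).fun_div (hasDerivAt_id x) hx).log
      (sinh_div_self_pos hx).ne').congr_deriv ?_
    simp only [id]
    field_simp

lemma strictConvexOn_logSinhc : StrictConvexOn ℝ univ logSinhc := by
  refine StrictMono.strictConvexOn_univ_of_deriv
    (continuous_iff_continuousAt.2 fun x ↦ (hasDerivAt_logSinhc x).continuousAt) ?_
  rw [funext fun x ↦ (hasDerivAt_logSinhc x).deriv]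
  exact strictMono_coth_sub_inv

lemma sub_log_one_add_two_mul_le_logSinhc {x : ℝ} (hx : 0 ≤ x) :
    x - log (1 + 2 * x) ≤ logSinhc x := by
  rcases hx.eq_or_lt with rfl | hx
  · simp
  rw [← exp_le_exp, exp_logSinhc hx.ne', exp_sub, exp_log (by positivity),
    div_le_div_iff₀ (by positivity) hx]
  have hsinh : 2 * sinh x = exp x - exp (-x) := by rw [sinh_eq]; ring
  have hexp : exp (-x) * (1 + 2 * x) ≤ exp x :=
    calc exp (-x) * (1 + 2 * x) ≤ exp (-x) * exp (2 * x) := by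
          gcongr; linarith [add_one_le_exp (2 * x)]
      _ = exp x := by rw [← exp_add]; ring_nf
  linear_combination (hexp - (1 + 2 * x) * hsinh) / 2

lemma eventually_mul_lt_logSinhc {k : ℝ} (hk : k < 1) : ∀ᶠ x in atTop, k * x < logSinhc x := by
  have htop : Tendsto (fun x : ℝ ↦ 1 + 2 * x) atTop atTop :=
    tendsto_atTop_add_const_left _ _ (tendsto_id.const_mul_atTop two_pos)
  have hlog : ∀ᶠ x : ℝ in atTop, ‖log (1 + 2 * x)‖ ≤ (1 - k) / 4 * ‖1 + 2 * x‖ :=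
    htop.eventually (isLittleO_log_id_atTop.def (by linarith))
  filter_upwards [hlog, eventually_gt_atTop (1 / 2)] with x hx hx'
  rw [norm_eq_abs, norm_eq_abs, abs_of_pos (by linarith : 0 < 1 + 2 * x)] at hx
  have := le_of_abs_le hx
  have := sub_log_one_add_two_mul_le_logSinhc (x := x) (by linarith)
  nlinarith [mul_pos (sub_pos.2 hk) (sub_pos.2 hx')]

/-- The logarithm of the quotient of the subtracted term `1 / (w₁ w₂ t ^ 2)` of `G₂` by the other
term, expressed through `logSinhc` so that it also makes sense at `t = 0`. -/
noncomputable def kernelLogRatio (a w₁ w₂ t : ℝ) : ℝ :=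
  logSinhc (w₁ / 2 * t) + logSinhc (w₂ / 2 * t) - ((w₁ + w₂) / 2 - a) * t

section Kernel

variable {a w₁ w₂ t : ℝ}

lemma G₂_eq_exp_neg_kernelLogRatio (hw₁ : w₁ ≠ 0) (hw₂ : w₂ ≠ 0) (ht : t ≠ 0) :
    G₂ a w₁ w₂ t = (exp (-kernelLogRatio a w₁ w₂ t) - 1) / (w₁ * w₂ * t ^ 2) := by
  have hx₁ : w₁ / 2 * t ≠ 0 := by positivity
  have hx₂ : w₂ / 2 * t ≠ 0 := by positivity
  have hnum : exp ((w₁ + w₂ - a) * t) =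
      exp (((w₁ + w₂) / 2 - a) * t) * (exp (w₁ / 2 * t) * exp (w₂ / 2 * t)) := by
    rw [← exp_add, ← exp_add]
    ring_nf
  rw [G₂, kernelLogRatio, neg_sub, exp_sub, exp_add, exp_logSinhc hx₁, exp_logSinhc hx₂, hnum,
    exp_sub_one_eq_exp_half_mul_sinh_half, exp_sub_one_eq_exp_half_mul_sinh_half,
    mul_div_right_comm, mul_div_right_comm]
  field_simp

lemma G₂_pos_iff (hw₁ : 0 < w₁) (hw₂ : 0 < w₂) (ht : t ≠ 0) :
    0 < G₂ a w₁ w₂ t ↔ kernelLogRatio a w₁ w₂ t < 0 := by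
  rw [G₂_eq_exp_neg_kernelLogRatio hw₁.ne' hw₂.ne' ht, div_pos_iff_of_pos_right (by positivity),
    sub_pos, one_lt_exp_iff, neg_pos]

lemma G₂_neg_iff (hw₁ : 0 < w₁) (hw₂ : 0 < w₂) (ht : t ≠ 0) :
    G₂ a w₁ w₂ t < 0 ↔ 0 < kernelLogRatio a w₁ w₂ t := by
  rw [G₂_eq_exp_neg_kernelLogRatio hw₁.ne' hw₂.ne' ht, div_lt_iff₀ (by positivity), zero_mul,
    sub_neg, exp_lt_one_iff, neg_lt_zero]

lemma G₂_eq_zero_iff (hw₁ : w₁ ≠ 0) (hw₂ : w₂ ≠ 0) (ht : t ≠ 0) :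
    G₂ a w₁ w₂ t = 0 ↔ kernelLogRatio a w₁ w₂ t = 0 := by
  rw [G₂_eq_exp_neg_kernelLogRatio hw₁ hw₂ ht, div_eq_zero_iff, or_iff_left (by positivity),
    sub_eq_zero, exp_eq_one_iff, neg_eq_zero]

@[simp]
lemma kernelLogRatio_zero : kernelLogRatio a w₁ w₂ 0 = 0 := by simp [kernelLogRatio]

lemma strictConvexOn_kernelLogRatio (hw₁ : w₁ ≠ 0) (hw₂ : w₂ ≠ 0) :
    StrictConvexOn ℝ univ (kernelLogRatio a w₁ w₂) :=
  ((strictConvexOn_comp_mul_left strictConvexOn_logSinhc (div_ne_zero hw₁ two_ne_zero)).add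
    (strictConvexOn_comp_mul_left strictConvexOn_logSinhc
      (div_ne_zero hw₂ two_ne_zero))).sub_concaveOn
    ((LinearMap.mulLeft ℝ ((w₁ + w₂) / 2 - a)).concaveOn convex_univ)

lemma kernelLogRatio_le (a w₁ w₂ t : ℝ) :
    kernelLogRatio a w₁ w₂ t ≤ t * ((w₁ ^ 2 + w₂ ^ 2) / 8 * t - ((w₁ + w₂) / 2 - a)) := by
  rw [kernelLogRatio]
  linarith [logSinhc_le_sq_div_two (w₁ / 2 * t), logSinhc_le_sq_div_two (w₂ / 2 * t)]

lemma exists_kernelLogRatio_neg (ha : a < (w₁ + w₂) / 2) :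
    ∃ u, 0 < u ∧ kernelLogRatio a w₁ w₂ u < 0 := by
  have hlim : Tendsto (fun t ↦ (w₁ ^ 2 + w₂ ^ 2) / 8 * t - ((w₁ + w₂) / 2 - a)) (𝓝[>] 0)
      (𝓝 ((w₁ ^ 2 + w₂ ^ 2) / 8 * 0 - ((w₁ + w₂) / 2 - a))) :=
    Continuous.tendsto' (by fun_prop) _ _ rfl |>.mono_left nhdsWithin_le_nhds
  obtain ⟨u, hneg, hu⟩ := ((hlim.eventually_lt_const (u := 0) (by linarith)).and
    self_mem_nhdsWithin).exists
  exact ⟨u, hu, (kernelLogRatio_le a w₁ w₂ u).trans_lt (mul_neg_of_pos_of_neg hu hneg)⟩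

lemma eventually_kernelLogRatio_pos (hw₁ : 0 < w₁) (hw₂ : 0 < w₂) (ha : 0 < a) :
    ∀ᶠ t in atTop, 0 < kernelLogRatio a w₁ w₂ t := by
  obtain ⟨k, hk, hk1⟩ : ∃ k, ((w₁ + w₂) / 2 - a) / ((w₁ + w₂) / 2) < k ∧ k < 1 :=
    exists_between <| (div_lt_one (by positivity)).2 (by linarith)
  have hscale {w : ℝ} (hw : 0 < w) : ∀ᶠ t in atTop, k * (w / 2 * t) < logSinhc (w / 2 * t) :=
    (tendsto_id.const_mul_atTop (half_pos hw)).eventually (eventually_mul_lt_logSinhc hk1)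
  filter_upwards [hscale hw₁, hscale hw₂, eventually_gt_atTop 0] with t h₁ h₂ ht
  have hslope : ((w₁ + w₂) / 2 - a) * t < k * ((w₁ + w₂) / 2) * t := by
    gcongr
    exact (div_lt_iff₀ (by positivity)).1 hk
  rw [kernelLogRatio]
  linarith

end Kernel

theorem stmt14 (w₁ w₂ a : ℝ) (hw₁ : 0 < w₁) (hw₂ : 0 < w₂)
    (ha : 0 < a) (ha' : a < (w₁ + w₂) / 2) :
    ∃ t₀ : ℝ, 0 < t₀ ∧ G₂ a w₁ w₂ t₀ = 0 ∧
      (∀ t : ℝ, 0 < t → t < t₀ → 0 < G₂ a w₁ w₂ t) ∧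
      (∀ t : ℝ, t₀ < t → G₂ a w₁ w₂ t < 0) := by
  have hconv : StrictConvexOn ℝ (Ici 0) (kernelLogRatio a w₁ w₂) :=
    (strictConvexOn_kernelLogRatio hw₁.ne' hw₂.ne').subset (subset_univ _) (convex_Ici 0)
  obtain ⟨u, hu, hneg⟩ := exists_kernelLogRatio_neg ha'
  obtain ⟨v, hpos, hv⟩ :=
    ((eventually_kernelLogRatio_pos hw₁ hw₂ ha).and (eventually_gt_atTop 0)).exists
  obtain ⟨t₀, ht₀, hzero, hbefore, hafter⟩ :=
    exists_sign_change_of_strictConvexOn_Ici hconv kernelLogRatio_zero.le hu hneg.le hv hpos.le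
  refine ⟨t₀, ht₀, (G₂_eq_zero_iff hw₁.ne' hw₂.ne' ht₀.ne').2 hzero, fun t ht hlt ↦ ?_,
    fun t hlt ↦ ?_⟩
  · exact (G₂_pos_iff hw₁ hw₂ ht.ne').2 (hbefore t ht hlt)
  · exact (G₂_neg_iff hw₁ hw₂ (ht₀.trans hlt).ne').2 (hafter t hlt)
end
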